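/- Let α and β be complex numbers with Re(α − 2β) > −2, β ≠ 1, and such that 1+α and 2+α−β are not nonpositive integers and none of the digamma values below is taken at a pole. Then ₃F₂(1, α, β; 1+α, 2+α−β; 1) = [−α(1+α−β)/(2(β−1))]·[ψ((α+1)/2) − ψ(α/2) + ψ(α/2 − β + 1) − ψ((α+1)/2 − β + 1)]. -/

import Mathlib

/-- The ascending Pochhammer symbol `(x)_n`. -/
noncomputable def poch (x : ℂ) (n : ℕ) : ℂ := (ascPochhammer ℂ n).eval x

/-- The generalized hypergeometric series `₃F₂(a₁,a₂,a₃; b₁,b₂; 1)`. -/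
noncomputable def F32 (a1 a2 a3 b1 b2 : ℂ) : ℂ :=
  ∑' n : ℕ, poch a1 n * poch a2 n * poch a3 n / ((n.factorial : ℂ) * poch b1 n * poch b2 n)

/-- `z` is not a nonpositive integer (i.e. not a pole of `Γ` or `ψ`). -/
def NotPole (z : ℂ) : Prop := ∀ n : ℕ, z ≠ -(n : ℂ)

/-- The digamma function `ψ(z) = Γ'(z)/Γ(z)`. -/
noncomputable def digamma (z : ℂ) : ℂ := deriv Complex.Gamma z / Complex.Gamma z

/-!
After cancelling `(α)_n / (1 + α)_n = α / (α + n)`, the series satisfies a contiguous relation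
between `α` and `α + 1` whose inhomogeneous term is elementary, because the corresponding
combination of terms telescopes in `n`. Iterating it moves `α` to infinity and leaves the
alternating series `2 (1 + α - β) ∑ (-1)^k / ((α + k) (c + k))` with `c = 2 + α - 2 β`. Splitting
this by parity gives digamma differences, since `∑ (w - z) / ((z + k) (w + k))` is the logarithmic
derivative at `s = 0` of
`∏ (z + s + k) (w - s + k) / ((z + k) (w + k)) = Γ(z) Γ(w) / (Γ(z + s) Γ(w - s))`.
-/

open Asymptotics Filter Topology
open Complex hiding digamma

namespace NotPole

variable {z : ℂ}

theorem ne_zero (hz : NotPole z) : z ≠ 0 := by simpa using hz 0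

theorem add_natCast_ne_zero (hz : NotPole z) (n : ℕ) : z + n ≠ 0 :=
  fun h => hz n (eq_neg_of_add_eq_zero_left h)

theorem add_natCast (hz : NotPole z) (k : ℕ) : NotPole (z + k) := fun n h =>
  hz (n + k) (by push_cast; linear_combination h)

theorem of_re_pos (hz : 0 < z.re) : NotPole z := by
  rintro n rfl
  rw [neg_re, natCast_re, neg_pos] at hz
  exact hz.not_ge n.cast_nonneg

theorem of_ne_zero_of_add_one (hz : z ≠ 0) (hz' : NotPole (z + 1)) : NotPole z
  | 0, h => hz (by simpa using h)
  | n + 1, h => hz' n (by rw [h]; push_cast; ring)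

end NotPole

section Pochhammer

theorem poch_zero (z : ℂ) : poch z 0 = 1 := by simp [poch]

theorem poch_succ (z : ℂ) (n : ℕ) : poch z (n + 1) = poch z n * (z + n) := by
  simp [poch, ascPochhammer_succ_eval]

theorem poch_succ_left (z : ℂ) (n : ℕ) : poch z (n + 1) = z * poch (z + 1) n := by
  simp [poch, ascPochhammer_succ_left]

theorem poch_one (n : ℕ) : poch 1 n = n.factorial := by simp [poch]

theorem NotPole.poch_ne_zero {z : ℂ} (hz : NotPole z) (n : ℕ) : poch z n ≠ 0 := by
  rw [poch, Ne, ascPochhammer_eval_eq_zero_iff]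
  rintro ⟨k, -, hk⟩
  exact hz k (by rw [hk, neg_neg])

theorem poch_eq_prod_range (z : ℂ) (n : ℕ) : poch z n = ∏ k ∈ Finset.range n, (z + k) := by
  induction n with
  | zero => simp [poch_zero]
  | succ n ih => rw [poch_succ, Finset.prod_range_succ, ih]

theorem GammaSeq_eq_div_poch (z : ℂ) (n : ℕ) :
    GammaSeq z n = (n : ℂ) ^ z * n.factorial / poch z (n + 1) := by
  rw [GammaSeq, poch_eq_prod_range]

theorem tendsto_inv_GammaSeq (z : ℂ) :
    Tendsto (fun n => (GammaSeq z n)⁻¹) atTop (𝓝 (Gamma z)⁻¹) := by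
  by_cases hz : NotPole z
  · exact (GammaSeq_tendsto_Gamma z).inv₀ (Gamma_ne_zero hz)
  · obtain ⟨m, rfl⟩ : ∃ m : ℕ, z = -m := by simpa [NotPole] using hz
    rw [Gamma_neg_nat_eq_zero, inv_zero]
    refine tendsto_const_nhds.congr' ?_
    filter_upwards [eventually_ge_atTop m] with n hn
    have h_poch : poch (-m : ℂ) (n + 1) = 0 :=
      ascPochhammer_eval_neg_coe_nat_of_lt (Nat.lt_succ_of_le hn)
    simp [GammaSeq_eq_div_poch, h_poch]

theorem poch_div_poch_eq_cpow_mul_GammaSeq (a b : ℂ) {n : ℕ} (hn : n ≠ 0) :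
    poch a (n + 1) / poch b (n + 1) = (n : ℂ) ^ (a - b) * (GammaSeq b n * (GammaSeq a n)⁻¹) := by
  have hn' : (n : ℂ) ≠ 0 := Nat.cast_ne_zero.2 hn
  have h_fact : (n.factorial : ℂ) ≠ 0 := Nat.cast_ne_zero.2 n.factorial_ne_zero
  have h_cpow (x : ℂ) : (n : ℂ) ^ x ≠ 0 := by simp [cpow_eq_zero_iff, hn']
  rw [GammaSeq_eq_div_poch, GammaSeq_eq_div_poch, inv_div, cpow_sub _ _ hn']
  have := h_cpow a
  have := h_cpow b
  field_simp

theorem norm_le_norm_add_natCast {z : ℂ} (hz : 0 ≤ z.re) (k : ℕ) : ‖z‖ ≤ ‖z + k‖ := by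
  have h_re : |z.re| ≤ |(z + k).re| := by
    rw [add_re, natCast_re, abs_of_nonneg hz, abs_of_nonneg (by positivity)]
    exact le_add_of_nonneg_right k.cast_nonneg
  have h_im : |z.im| ≤ |(z + k).im| := by simp
  rw [norm_eq_sqrt_sq_add_sq, norm_eq_sqrt_sq_add_sq]
  exact Real.sqrt_le_sqrt (add_le_add (sq_le_sq.2 h_re) (sq_le_sq.2 h_im))

theorem norm_poch_le_norm_poch_add_natCast {z : ℂ} (hz : 0 ≤ z.re) (k n : ℕ) :
    ‖poch z n‖ ≤ ‖poch (z + k) n‖ := by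
  rw [poch_eq_prod_range, poch_eq_prod_range, norm_prod, norm_prod]
  refine Finset.prod_le_prod (fun _ _ => norm_nonneg _) fun i _ => ?_
  rw [add_right_comm]
  refine norm_le_norm_add_natCast ?_ k
  rw [add_re, natCast_re]
  positivity

end Pochhammer

section Asymptotics

theorem isBigO_inv_add_natCast (z : ℂ) :
    (fun n : ℕ => (z + n)⁻¹) =O[atTop] fun n : ℕ => (n : ℝ)⁻¹ := by
  have h := (isBigO_sup.mp (Int.cofinite_eq ▸ EisensteinSeries.linear_inv_isBigO_right 1 z)).2
  simpa [← Nat.map_cast_int_atTop, isBigO_map, Function.comp_def] using h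

theorem summable_inv_add_natCast_mul (z w : ℂ) :
    Summable fun n : ℕ => ((z + n) * (w + n))⁻¹ := by
  refine summable_of_isBigO_nat (Real.summable_nat_pow_inv.2 one_lt_two) ?_
  simpa [mul_inv, pow_two, mul_comm] using (isBigO_inv_add_natCast z).mul (isBigO_inv_add_natCast w)

theorem isBigO_poch_div_poch (a b : ℂ) :
    (fun n : ℕ => poch a (n + 1) / poch b (n + 1)) =O[atTop] fun n : ℕ => (n : ℝ) ^ (a - b).re := by
  have h_bdd : (fun n => GammaSeq b n * (GammaSeq a n)⁻¹) =O[atTop] fun _ => (1 : ℝ) :=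
    ((GammaSeq_tendsto_Gamma b).mul (tendsto_inv_GammaSeq a)).isBigO_one ℝ
  have h_cpow : (fun n : ℕ => (n : ℂ) ^ (a - b)) =O[atTop] fun n : ℕ => (n : ℝ) ^ (a - b).re := by
    refine .of_bound' ?_
    filter_upwards [eventually_gt_atTop 0] with n hn
    rw [norm_natCast_cpow_of_pos hn]
    exact le_abs_self _
  refine ((h_cpow.mul h_bdd).congr' ?_ (.of_forall fun n => mul_one _))
  filter_upwards [eventually_ne_atTop 0] with n hn
  rw [poch_div_poch_eq_cpow_mul_GammaSeq a b hn]

variable {a b : ℂ}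

theorem tendsto_poch_div_poch_zero (hab : a.re < b.re) :
    Tendsto (fun n => poch a n / poch b n) atTop (𝓝 0) := by
  rw [← tendsto_add_atTop_iff_nat 1]
  have h_exp : 0 < (b - a).re := by simpa using hab
  refine (isBigO_poch_div_poch a b).trans_tendsto ?_
  have := (tendsto_rpow_neg_atTop h_exp).comp tendsto_natCast_atTop_atTop
  simpa [Function.comp_def] using this

theorem summable_poch_div_poch_div_add_natCast (hab : a.re < b.re) (z : ℂ) :
    Summable fun n : ℕ => poch a n / poch b n / (z + n) := by
  rw [← summable_nat_add_iff 1]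
  have h_exp : (a - b).re - 1 < -1 := by rw [sub_re]; linarith
  refine summable_of_isBigO_nat (Real.summable_nat_rpow.2 h_exp) ?_
  refine ((isBigO_poch_div_poch a b).mul (isBigO_inv_add_natCast (z + 1))).congr' ?_ ?_
  · exact .of_forall fun n => by push_cast; rw [add_right_comm, add_assoc, ← div_eq_mul_inv]
  · filter_upwards [eventually_ne_atTop 0] with n hn
    rw [Real.rpow_sub_one (Nat.cast_ne_zero.2 hn), div_eq_mul_inv]

end Asymptotics

section AlternatingSeries

theorem sum_range_neg_one_pow_mul_add {R : Type*} [Ring R] (f : ℕ → R) (n : ℕ) :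
    ∑ k ∈ Finset.range n, (-1) ^ k * (f k + f (k + 1)) = f 0 - (-1) ^ n * f n := by
  convert! Finset.sum_range_sub' (fun k => (-1) ^ k * f k) n using 2 with k
  · simp [pow_succ, mul_add]
  · simp

theorem hasSum_neg_one_pow_mul_add {𝕜 : Type*} [NormedField 𝕜] {f : ℕ → 𝕜}
    (hf : Tendsto f atTop (𝓝 0)) (h : Summable fun k => (-1) ^ k * (f k + f (k + 1))) :
    HasSum (fun k => (-1) ^ k * (f k + f (k + 1))) (f 0) := by
  have h_sign : Tendsto (fun n => (-1) ^ n * f n) atTop (𝓝 0) := by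
    rw [tendsto_zero_iff_norm_tendsto_zero] at hf ⊢
    simpa using hf
  have h_lim := h_sign.const_sub (f 0)
  simp only [← sum_range_neg_one_pow_mul_add, sub_zero] at h_lim
  exact (tendsto_nhds_unique h.hasSum.tendsto_sum_nat h_lim) ▸ h.hasSum

end AlternatingSeries

section Digamma

variable {z w : ℂ}

theorem prod_range_one_add_eq_poch (hz : NotPole z) (hw : NotPole w) (s : ℂ) (n : ℕ) :
    ∏ k ∈ Finset.range n, (1 + s * (w - z - s) * ((z + k) * (w + k))⁻¹) =
      poch (z + s) n / poch z n * (poch (w - s) n / poch w n) := by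
  induction n with
  | zero => simp [poch_zero]
  | succ n ih =>
    have := hz.add_natCast_ne_zero n
    have := hw.add_natCast_ne_zero n
    simp only [Finset.prod_range_succ, ih, poch_succ]
    field_simp
    ring

theorem tendsto_poch_div_poch_mul (z w s : ℂ) :
    Tendsto (fun n => poch (z + s) n / poch z n * (poch (w - s) n / poch w n)) atTop
      (𝓝 (Gamma z * (Gamma (z + s))⁻¹ * (Gamma w * (Gamma (w - s))⁻¹))) := by
  rw [← tendsto_add_atTop_iff_nat 1]
  refine (((GammaSeq_tendsto_Gamma z).mul (tendsto_inv_GammaSeq (z + s))).mul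
    ((GammaSeq_tendsto_Gamma w).mul (tendsto_inv_GammaSeq (w - s)))).congr' ?_
  filter_upwards [eventually_ne_atTop 0] with n hn
  have h_cpow : (n : ℂ) ^ (z + s - z) * (n : ℂ) ^ (w - s - w) = 1 := by
    rw [← cpow_add _ _ (Nat.cast_ne_zero.2 hn)]
    simp
  rw [poch_div_poch_eq_cpow_mul_GammaSeq _ _ hn, poch_div_poch_eq_cpow_mul_GammaSeq _ _ hn]
  linear_combination (-(GammaSeq z n * (GammaSeq (z + s) n)⁻¹ *
    (GammaSeq w n * (GammaSeq (w - s) n)⁻¹))) * h_cpow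

theorem tprod_one_add_eq_Gamma (hz : NotPole z) (hw : NotPole w) (s : ℂ) :
    ∏' k : ℕ, (1 + s * (w - z - s) * ((z + k) * (w + k))⁻¹) =
      Gamma z * (Gamma (z + s))⁻¹ * (Gamma w * (Gamma (w - s))⁻¹) := by
  have h_mult : Multipliable fun k : ℕ => 1 + s * (w - z - s) * ((z + k) * (w + k))⁻¹ :=
    multipliable_one_add_of_summable ((summable_inv_add_natCast_mul z w).mul_left _).norm
  refine tendsto_nhds_unique h_mult.hasProd.tendsto_prod_nat ?_
  simpa only [prod_range_one_add_eq_poch hz hw] using tendsto_poch_div_poch_mul z w s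

theorem multipliableLocallyUniformlyOn_one_add (z w : ℂ) :
    MultipliableLocallyUniformlyOn
      (fun (k : ℕ) s => 1 + s * (w - z - s) * ((z + k) * (w + k))⁻¹) (Metric.ball 0 1) := by
  refine ((summable_inv_add_natCast_mul z w).norm.mul_left
    (‖w - z‖ + 1)).multipliableLocallyUniformlyOn_nat_one_add Metric.isOpen_ball ?_
    fun k => by fun_prop
  refine .of_forall fun k s hs => ?_
  have hs' : ‖s‖ ≤ 1 := (mem_ball_zero_iff.1 hs).le
  rw [norm_mul, norm_mul]
  gcongr
  calc ‖s‖ * ‖w - z - s‖ ≤ 1 * (‖w - z‖ + 1) := by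
        gcongr
        exact (norm_sub_le _ _).trans (by gcongr)
    _ = _ := one_mul _

theorem hasDerivAt_one_add_mul_sub_mul (z w t : ℂ) :
    HasDerivAt (fun s => 1 + s * (w - z - s) * t) ((w - z) * t) 0 := by
  have h := (((hasDerivAt_id (0 : ℂ)).mul
    ((hasDerivAt_id (0 : ℂ)).const_sub (w - z))).mul_const t).const_add 1
  simpa using h

theorem hasDerivAt_Gamma_mul_inv_Gamma (hz : NotPole z) :
    HasDerivAt (fun u => Gamma z * (Gamma u)⁻¹) (-digamma z) z := by
  have h_ne := Gamma_ne_zero hz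
  refine (((differentiableAt_Gamma z hz).hasDerivAt.fun_inv h_ne).const_mul _).congr_deriv ?_
  rw [digamma]
  field_simp

theorem logDeriv_Gamma_mul_inv_Gamma_mul (hz : NotPole z) (hw : NotPole w) :
    logDeriv (fun s => Gamma z * (Gamma (z + s))⁻¹ * (Gamma w * (Gamma (w - s))⁻¹)) 0 =
      digamma w - digamma z := by
  have h_add : HasDerivAt (fun s => Gamma z * (Gamma (z + s))⁻¹) (-digamma z) 0 :=
    HasDerivAt.comp_const_add z 0 (by simpa using hasDerivAt_Gamma_mul_inv_Gamma hz)
  have h_sub : HasDerivAt (fun s => Gamma w * (Gamma (w - s))⁻¹) (- -digamma w) 0 :=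
    HasDerivAt.comp_const_sub w 0 (by simpa using hasDerivAt_Gamma_mul_inv_Gamma hw)
  rw [logDeriv_apply, (h_add.fun_mul h_sub).deriv]
  simp only [add_zero, sub_zero, mul_inv_cancel₀ (Gamma_ne_zero hz),
    mul_inv_cancel₀ (Gamma_ne_zero hw)]
  ring

theorem hasSum_digamma_sub (hz : NotPole z) (hw : NotPole w) :
    HasSum (fun k : ℕ => (w - z) * ((z + k) * (w + k))⁻¹) (digamma w - digamma z) := by
  have h_summable := (summable_inv_add_natCast_mul z w).mul_left (w - z)
  have h_log (k : ℕ) : logDeriv (fun s => 1 + s * (w - z - s) * ((z + k) * (w + k))⁻¹) 0 =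
      (w - z) * ((z + k) * (w + k))⁻¹ := by
    rw [logDeriv_apply, (hasDerivAt_one_add_mul_sub_mul z w _).deriv]
    simp
  have h := logDeriv_tprod_eq_tsum Metric.isOpen_ball (Metric.mem_ball_self one_pos)
    (f := fun (k : ℕ) s => 1 + s * (w - z - s) * ((z + k) * (w + k))⁻¹)
    (fun k => by simp) (fun k => by fun_prop) (by simpa only [h_log] using h_summable)
    (multipliableLocallyUniformlyOn_one_add z w) (by simp)
  simp only [tprod_one_add_eq_Gamma hz hw, h_log, logDeriv_Gamma_mul_inv_Gamma_mul hz hw] at h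
  exact h ▸ h_summable.hasSum

theorem hasSum_alternating_digamma (hz : NotPole (z / 2)) (hz' : NotPole ((z + 1) / 2))
    (hw : NotPole (w / 2)) (hw' : NotPole ((w + 1) / 2)) :
    HasSum (fun k : ℕ => (-1) ^ k * ((w - z) * ((z + k) * (w + k))⁻¹))
      ((digamma ((z + 1) / 2) - digamma (z / 2) + digamma (w / 2) -
        digamma ((w + 1) / 2)) / 2) := by
  have h_even (j : ℕ) : (-1) ^ (2 * j) * ((w - z) * ((z + (2 * j : ℕ)) * (w + (2 * j : ℕ)))⁻¹) =
      (w / 2 - z / 2) * ((z / 2 + j) * (w / 2 + j))⁻¹ / 2 := by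
    rw [Even.neg_one_pow (even_two_mul j), one_mul]
    push_cast
    field_simp
  have h_odd (j : ℕ) : (-1) ^ (2 * j + 1) *
      ((w - z) * ((z + (2 * j + 1 : ℕ)) * (w + (2 * j + 1 : ℕ)))⁻¹) =
      -(((w + 1) / 2 - (z + 1) / 2) * (((z + 1) / 2 + j) * ((w + 1) / 2 + j))⁻¹ / 2) := by
    rw [Odd.neg_one_pow (odd_two_mul_add_one j), neg_one_mul]
    push_cast
    field_simp
    ring
  convert! HasSum.even_add_odd (f := fun k : ℕ => (-1) ^ k * ((w - z) * ((z + k) * (w + k))⁻¹))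
    (by simpa only [h_even] using (hasSum_digamma_sub hz hw).div_const 2)
    (by simpa only [h_odd] using ((hasSum_digamma_sub hz' hw').div_const 2).neg) using 1
  ring

end Digamma

/-- The series `₃F₂(1, α, β; 1 + α, 2 + α - β; 1) / α`, after cancelling
`(α)_n / (1 + α)_n = α / (α + n)`. -/
noncomputable def reducedF32 (α β : ℂ) : ℂ :=
  ∑' n : ℕ, poch β n / poch (2 + α - β) n / (α + n)

section ReducedF32

variable {α β : ℂ}

theorem F32_eq_mul_reducedF32 (hα : NotPole α) (β : ℂ) :
    F32 1 α β (1 + α) (2 + α - β) = α * reducedF32 α β := by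
  rw [F32, reducedF32, ← tsum_mul_left]
  refine tsum_congr fun n => ?_
  have h_fact : (n.factorial : ℂ) ≠ 0 := Nat.cast_ne_zero.2 n.factorial_ne_zero
  have h_poch := hα.poch_ne_zero n
  have h_shift : poch (1 + α) n = poch α n * (α + n) / α := by
    rw [← poch_succ, poch_succ_left, mul_div_cancel_left₀ _ hα.ne_zero, add_comm]
  rw [poch_one, h_shift]
  field_simp

theorem reducedF32_term_add_eq_sub (hα : NotPole α) (hb : NotPole (2 + α - β))
    (hc : 2 + α - 2 * β ≠ 0) (n : ℕ) :
    poch β n / poch (2 + α - β) n / (α + n) + (1 + α - β) / (2 + α - β) *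
        (poch β n / poch (2 + (α + 1) - β) n / (α + 1 + n)) =
      poch β n / poch (2 + α - β) n * (1 / (2 + α - 2 * β) + 1 / (α + n)) -
        poch β (n + 1) / poch (2 + α - β) (n + 1) *
          (1 / (2 + α - 2 * β) + 1 / (α + (n + 1 : ℕ))) := by
  have h_shift : poch (2 + (α + 1) - β) n =
      poch (2 + α - β) n * (2 + α - β + n) / (2 + α - β) := by
    rw [← poch_succ, poch_succ_left, mul_div_cancel_left₀ _ hb.ne_zero]
    congr 1
    ring
  have h_b := hb.ne_zero
  have h_bn := hb.add_natCast_ne_zero n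
  have h_α_succ : α + (n + 1) ≠ 0 := mod_cast hα.add_natCast_ne_zero (n + 1)
  rw [h_shift, poch_succ, poch_succ, add_right_comm α 1, add_assoc α]
  push_cast
  field_simp
  ring

theorem reducedF32_add_reducedF32_add_one (hα : NotPole α) (hb : NotPole (2 + α - β))
    (hβ : β.re < (2 + α - β).re) :
    reducedF32 α β + (1 + α - β) / (2 + α - β) * reducedF32 (α + 1) β =
      2 * (1 + α - β) * (α * (2 + α - 2 * β))⁻¹ := by
  have hβ' : β.re < (2 + (α + 1) - β).re := by
    simp only [add_re, sub_re, one_re] at hβ ⊢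
    linarith
  have hc : 2 + α - 2 * β ≠ 0 := by
    rw [two_mul, ← sub_sub, sub_ne_zero]
    exact fun h => hβ.ne' (congrArg re h)
  have h_summable := summable_poch_div_poch_div_add_natCast hβ α
  have h_summable' :=
    (summable_poch_div_poch_div_add_natCast hβ' (α + 1)).mul_left ((1 + α - β) / (2 + α - β))
  have h_sum := (h_summable.add h_summable').hasSum.tendsto_sum_nat
  simp only [reducedF32_term_add_eq_sub hα hb hc, Finset.sum_range_sub'] at h_sum
  have h_inv : Tendsto (fun n : ℕ => 1 / (α + n)) atTop (𝓝 0) := by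
    simpa using (isBigO_inv_add_natCast α).trans_tendsto tendsto_inv_atTop_nhds_zero_nat
  have h_lim := ((tendsto_poch_div_poch_zero hβ).mul
    (h_inv.const_add (1 / (2 + α - 2 * β)))).const_sub
    (poch β 0 / poch (2 + α - β) 0 * (1 / (2 + α - 2 * β) + 1 / (α + (0 : ℕ))))
  rw [reducedF32, reducedF32, ← tsum_mul_left, ← h_summable.tsum_add h_summable']
  simp only [reducedF32_term_add_eq_sub hα hb hc]
  rw [tendsto_nhds_unique h_sum h_lim, poch_zero, poch_zero, Nat.cast_zero, add_zero]
  have h_α := hα.ne_zero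
  field_simp
  ring

theorem reducedF32_div_add_reducedF32_div (hα : NotPole α) (hb : NotPole (1 + α - β))
    (hβ : β.re < (2 + α - β).re) :
    reducedF32 α β / (1 + α - β) + reducedF32 (α + 1) β / (1 + (α + 1) - β) =
      2 * (α * (2 + α - 2 * β))⁻¹ := by
  have h_succ : 1 + (α + 1) - β = 2 + α - β := by ring
  have hb' : NotPole (2 + α - β) := by
    convert hb.add_natCast 1 using 1
    ring
  have h_contiguous := reducedF32_add_reducedF32_add_one hα hb' hβ
  have h_ne := hb.ne_zero
  rw [h_succ, eq_comm, ← mul_right_inj' h_ne, ← mul_assoc, mul_comm _ 2, ← h_contiguous]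
  field_simp

theorem norm_reducedF32_add_natCast_le (hα : 0 < α.re) (hb : 0 < (2 + α - β).re)
    (hβ : β.re < (2 + α - β).re) (k : ℕ) :
    ‖reducedF32 (α + k) β‖ ≤ ∑' n : ℕ, ‖poch β n / poch (2 + α - β) n / (α + n)‖ := by
  refine tsum_of_norm_bounded (summable_poch_div_poch_div_add_natCast hβ α).norm.hasSum fun n => ?_
  have h_poch := norm_pos_iff.2 ((NotPole.of_re_pos hb).poch_ne_zero n)
  have h_add := norm_pos_iff.2 ((NotPole.of_re_pos hα).add_natCast_ne_zero n)
  rw [norm_div, norm_div, norm_div, norm_div, show 2 + (α + k) - β = 2 + α - β + k by ring,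
    add_right_comm α]
  gcongr
  · exact norm_poch_le_norm_poch_add_natCast hb.le k n
  · refine norm_le_norm_add_natCast ?_ k
    rw [add_re, natCast_re]
    positivity

theorem isBigO_reducedF32_add_natCast (α β : ℂ) :
    (fun m : ℕ => reducedF32 (α + m) β) =O[atTop] fun _ => (1 : ℝ) := by
  obtain ⟨N, hN⟩ := exists_nat_gt (max (-α.re) (max (-(2 + α - β).re) (β - (2 + α - β)).re))
  obtain ⟨hα, hb, hβ⟩ : 0 < (α + N).re ∧ 0 < (2 + (α + N) - β).re ∧
      β.re < (2 + (α + N) - β).re := by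
    simp only [max_lt_iff, add_re, sub_re, natCast_re] at hN ⊢
    refine ⟨?_, ?_, ?_⟩ <;> linarith [hN.1, hN.2.1, hN.2.2]
  refine .of_bound (∑' n : ℕ, ‖poch β n / poch (2 + (α + N) - β) n / (α + N + n)‖) ?_
  filter_upwards [eventually_ge_atTop N] with m hm
  obtain ⟨k, rfl⟩ := Nat.exists_eq_add_of_le hm
  rw [norm_one, mul_one, Nat.cast_add, ← add_assoc]
  exact norm_reducedF32_add_natCast_le hα hb hβ k

theorem tendsto_reducedF32_div_zero (α β : ℂ) :
    Tendsto (fun m : ℕ => reducedF32 (α + m) β / (1 + (α + m) - β)) atTop (𝓝 0) := by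
  have h := ((isBigO_reducedF32_add_natCast α β).mul
    (isBigO_inv_add_natCast (1 + α - β))).trans_tendsto
      (by simpa using tendsto_inv_atTop_nhds_zero_nat (𝕜 := ℝ))
  refine h.congr fun m => ?_
  rw [div_eq_mul_inv]
  congr 2
  ring

theorem reducedF32_eq_mul_tsum (hα : NotPole α) (hb : NotPole (2 + α - β))
    (hβ : β.re < (2 + α - β).re) :
    reducedF32 α β =
      2 * (1 + α - β) * ∑' k : ℕ, (-1) ^ k * ((α + k) * (2 + α - 2 * β + k))⁻¹ := by
  rcases eq_or_ne (1 + α - β) 0 with h_zero | h_ne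
  · simpa [h_zero] using reducedF32_add_reducedF32_add_one hα hb hβ
  have hb' : NotPole (1 + α - β) := .of_ne_zero_of_add_one h_ne (by convert hb using 1; ring)
  have h_rec (m : ℕ) : reducedF32 (α + m) β / (1 + (α + m) - β) +
      reducedF32 (α + (m + 1 : ℕ)) β / (1 + (α + (m + 1 : ℕ)) - β) =
        2 * ((α + m) * (2 + α - 2 * β + m))⁻¹ := by
    have h_re : β.re < (2 + (α + m) - β).re := by
      simp only [add_re, sub_re, natCast_re] at hβ ⊢
      linarith [m.cast_nonneg (α := ℝ)]
    have h_shift := hb'.add_natCast m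
    convert reducedF32_div_add_reducedF32_div (hα.add_natCast m) (by convert h_shift using 1; ring)
      h_re using 2
    · push_cast
      simp only [add_assoc]
    · ring
  have h_summable :
      Summable fun k : ℕ => (-1) ^ k * (2 * ((α + k) * (2 + α - 2 * β + k))⁻¹) := by
    refine .of_norm ?_
    simpa using ((summable_inv_add_natCast_mul α (2 + α - 2 * β)).mul_left 2).norm
  have h := hasSum_neg_one_pow_mul_add (tendsto_reducedF32_div_zero α β)
    (by simpa only [h_rec] using h_summable)
  simp only [h_rec, mul_left_comm _ (2 : ℂ), Nat.cast_zero, add_zero] at h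
  rw [mul_right_comm, ← tsum_mul_left, h.tsum_eq, div_mul_cancel₀ _ h_ne]

end ReducedF32

theorem F32_summation_formula' (α β : ℂ) (h : -2 < (α - 2 * β).re) (hβ : β ≠ 1)
    (hl₁ : NotPole (1 + α)) (hl₂ : NotPole (2 + α - β))
    (hp₁ : NotPole ((α + 1) / 2)) (hp₂ : NotPole (α / 2))
    (hp₃ : NotPole (α / 2 - β + 1)) (hp₄ : NotPole ((α + 1) / 2 - β + 1)) :
    F32 1 α β (1 + α) (2 + α - β) =
      -α * (1 + α - β) / (2 * (β - 1)) *
        (digamma ((α + 1) / 2) - digamma (α / 2) + digamma (α / 2 - β + 1) -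
          digamma ((α + 1) / 2 - β + 1)) := by
  have hα : NotPole α :=
    .of_ne_zero_of_add_one (fun h₀ => hp₂.ne_zero (by simp [h₀])) (add_comm 1 α ▸ hl₁)
  have h_re : β.re < (2 + α - β).re := by
    simp only [sub_re, add_re, re_ofNat, two_mul] at h ⊢
    linarith
  have h_half : α / 2 - β + 1 = (2 + α - 2 * β) / 2 := by ring
  have h_half' : (α + 1) / 2 - β + 1 = (2 + α - 2 * β + 1) / 2 := by ring
  rw [h_half] at hp₃ ⊢
  rw [h_half'] at hp₄ ⊢
  have h_digamma := (hasSum_alternating_digamma hp₂ hp₁ hp₃ hp₄).tsum_eq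
  simp only [mul_left_comm _ (2 + α - 2 * β - α), tsum_mul_left] at h_digamma
  have h_ne : 2 * (β - 1) ≠ 0 := mul_ne_zero two_ne_zero (sub_ne_zero.2 hβ)
  rw [F32_eq_mul_reducedF32 hα, reducedF32_eq_mul_tsum hα hl₂ h_re, div_mul_eq_mul_div,
    eq_div_iff h_ne]
  linear_combination (-2 * α * (1 + α - β)) * h_digamma
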